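/- Let A : ℝⁿ → ℝⁿ and B : ℝᵐ → ℝⁿ be linear maps such that the range of B is invariant under A, i.e., A(Im B) ⊆ Im B. Let u : ℝ → ℝᵐ be continuous and let x : ℝ → ℝⁿ be differentiable with x′(t) = A(x(t)) + B(u(t)) for all t. If x(0) ∈ Im B, then x(t) ∈ Im B for all t ≥ 0. -/

import Mathlib

/-!
Modulo a closed `A`-invariant subspace `W`, a velocity `A x + w` with `w ∈ W` depends only on the
class of `x`. The class of a trajectory in `E ⧸ W` therefore solves a homogeneous linear equation,
and if it vanishes at one time, uniqueness of solutions makes it vanish at all times. The quotient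
is normed because `W` is closed.
-/

section QuotientMap

variable {R M N : Type*} [Ring R] [TopologicalSpace M] [AddCommGroup M] [Module R M]
  [TopologicalSpace N] [AddCommGroup N] [Module R N]

/-- The continuous linear map `M ⧸ p → N ⧸ q` induced by a continuous linear map sending `p`
into `q`: the continuous version of `Submodule.mapQ`. With `p = q`, it is the operator induced
on the quotient by an invariant subspace. -/
def quotientMapL (p : Submodule R M) (q : Submodule R N) (f : M →L[R] N)
    (h : ∀ v ∈ p, f v ∈ q) : M ⧸ p →L[R] N ⧸ q :=
  p.liftQL (q.mkQL ∘L f) fun v hv ↦ (Submodule.Quotient.mk_eq_zero q).2 (h v hv)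

theorem quotientMapL_mkQL (p : Submodule R M) (q : Submodule R N) (f : M →L[R] N)
    (h : ∀ v ∈ p, f v ∈ q) (v : M) :
    quotientMapL p q f h (p.mkQL v) = q.mkQL (f v) :=
  rfl

end QuotientMap

theorem hasDerivAt_mkQL_of_invariant {𝕜 E : Type*} [NontriviallyNormedField 𝕜]
    [NormedAddCommGroup E] [NormedSpace 𝕜 E] {W : Submodule 𝕜 E} [IsClosed (W : Set E)]
    {A : E →L[𝕜] E} (hA : ∀ v ∈ W, A v ∈ W) {x : 𝕜 → E} {w : E} {t : 𝕜} (hw : w ∈ W)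
    (hx : HasDerivAt x (A (x t) + w) t) :
    HasDerivAt (fun s ↦ W.mkQL (x s)) (quotientMapL W W A hA (W.mkQL (x t))) t := by
  have hw_zero : W.mkQL w = 0 := (Submodule.Quotient.mk_eq_zero W).2 hw
  have velocity : W.mkQL (A (x t) + w) = quotientMapL W W A hA (W.mkQL (x t)) := by
    rw [map_add, hw_zero, add_zero, quotientMapL_mkQL]
  exact velocity ▸ W.mkQL.hasFDerivAt.comp_hasDerivAt t hx

section LinearODE

variable {E : Type*} [NormedAddCommGroup E] [NormedSpace ℝ E]

theorem eq_zero_of_forall_hasDerivAt_clm_apply {L : E →L[ℝ] E} {y : ℝ → E} {t₀ : ℝ}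
    (hy : ∀ t, HasDerivAt y (L (y t)) t) (h₀ : y t₀ = 0) : y = 0 := by
  have zero_solution (t : ℝ) : HasDerivAt (0 : ℝ → E) (L 0) t := by
    rw [map_zero]
    exact hasDerivAt_zero t
  exact ODE_solution_unique_univ (v := fun _ ↦ L) (s := fun _ ↦ Set.univ)
    (fun _ ↦ L.lipschitz.lipschitzOnWith) (fun t ↦ ⟨hy t, Set.mem_univ _⟩)
    (fun t ↦ ⟨zero_solution t, Set.mem_univ _⟩) h₀

theorem range_invariant_linear_control_system_general {W : Submodule ℝ E}
    (hW : IsClosed (W : Set E)) {A : E →L[ℝ] E} (hA : ∀ v ∈ W, A v ∈ W) {x w : ℝ → E}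
    (hw : ∀ t, w t ∈ W) (hx : ∀ t, HasDerivAt x (A (x t) + w t) t) {t₀ : ℝ} (h₀ : x t₀ ∈ W)
    (t : ℝ) : x t ∈ W := by
  have class_eq_zero : (fun s ↦ W.mkQL (x s)) = 0 :=
    eq_zero_of_forall_hasDerivAt_clm_apply
      (fun s ↦ hasDerivAt_mkQL_of_invariant hA (hw s) (hx s))
      ((Submodule.Quotient.mk_eq_zero W).2 h₀)
  exact (Submodule.Quotient.mk_eq_zero W).1 (congrFun class_eq_zero t)

end LinearODE

/-- **Invariance of the range of `B` for a linear control system** `x' = A x + B u`: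
if `A (Im B) ⊆ Im B`, then every trajectory starting in `Im B` stays in `Im B` in
forward time. -/
theorem range_invariant_linear_control_system {n m : ℕ}
    (A : (Fin n → ℝ) →ₗ[ℝ] (Fin n → ℝ)) (B : (Fin m → ℝ) →ₗ[ℝ] (Fin n → ℝ))
    (hAB : ∀ v ∈ LinearMap.range B, A v ∈ LinearMap.range B)
    (u : ℝ → Fin m → ℝ) (hu : Continuous u)
    (x : ℝ → Fin n → ℝ) (hx : ∀ t : ℝ, HasDerivAt x (A (x t) + B (u t)) t)
    (h0 : x 0 ∈ LinearMap.range B) :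
    ∀ t : ℝ, 0 ≤ t → x t ∈ LinearMap.range B := by
  intro t _
  exact range_invariant_linear_control_system_general (A := A.toContinuousLinearMap)
    (LinearMap.range B).closed_of_finiteDimensional hAB (fun s ↦ B.mem_range_self (u s)) hx h0 t
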